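/- Let A be a bialgebra over K and H a Hopf algebra over K with antipode S, and suppose i : H → A and π : A → H are bialgebra morphisms with π ∘ i = id_H. Define Π : A → A by Π(a) = ∑ a₍₁₎ · i(S(π(a₍₂₎))) (the convolution product of id_A with i ∘ S ∘ π). Then Π is an idempotent Rota-Baxter operator of weight -1 on A. -/

import Mathlib

/-!
STATEMENT 7: Let `A` be a bialgebra, `H` a Hopf algebra, and `i : H → A`, `π : A → H`
bialgebra morphisms with `π ∘ i = id`. Then `Π = id_A ⋆ (i ∘ S ∘ π)`, i.e.
`Pr(a) = ∑ a₍₁₎ · i(S(π(a₍₂₎)))`, is an idempotent Rota-Baxter operator of weight `-1` on `A`.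
-/

open TensorProduct Coalgebra HopfAlgebra LinearMap

/-
The projection `Π` takes values in the subalgebra of coinvariants of the coaction
`ρ(a) = ∑ a₍₁₎ ⊗ π(a₍₂₎)`: in the convolution algebra, `ρ ∘ i = (i ⊗ 1) ⋆ (1 ⊗ id)`, and
precomposing an algebra map with the antipode inverts it, whence
`(1 ⊗ id) ⋆ (ρ ∘ i ∘ S) = i ∘ S ⊗ 1`; precomposing with `π` gives `ρ(Π(a)) = Π(a) ⊗ 1`.
Since `Δ` is multiplicative and `S` antimultiplicative, `Π(xy) = ∑ x₍₁₎ Π(y) i(S(π(x₍₂₎)))`.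
So `Π` is left linear over the coinvariants, hence fixes them and is idempotent; and `Π(xy)` depends
on `y` only through `Π(y)`. Therefore `Π(x Π(y)) = Π(xy)` and `Π(Π(x) y) = Π(x) Π(y)`.
-/

open WithConv Algebra.TensorProduct

section Convolution

variable {K : Type*} [CommSemiring K]

theorem toConv_map_comp_comul {C A B : Type*} [AddCommMonoid C] [Module K C] [Coalgebra K C]
    [Semiring A] [Algebra K A] [Semiring B] [Algebra K B] (f : C →ₗ[K] A) (g : C →ₗ[K] B) :
    toConv (TensorProduct.map f g ∘ₗ comul) =
      toConv ((includeLeft : A →ₐ[K] A ⊗[K] B).toLinearMap ∘ₗ f) *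
        toConv ((includeRight : B →ₐ[K] A ⊗[K] B).toLinearMap ∘ₗ g) := by
  ext c
  rw [(ℛ K c).convMul_apply]
  simp [← (ℛ K c).eq]

variable {H B : Type*} [Semiring H] [HopfAlgebra K H] [Semiring B] [Algebra K B]

theorem toConv_algHom_comp_one (f : H →ₐ[K] B) :
    toConv (f.toLinearMap ∘ₗ (1 : WithConv (H →ₗ[K] H)).ofConv) = 1 := by
  ext h
  simp [LinearMap.convOne_def]

theorem toConv_algHom_comp_antipode_mul_self (f : H →ₐ[K] B) :
    toConv (f.toLinearMap ∘ₗ antipode K) * toConv f.toLinearMap = 1 := by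
  rw [← toConv_algHom_comp_one f, ← antipode_mul_id, algHom_comp_convMul_distrib]
  rfl

theorem toConv_algHom_mul_comp_antipode (f : H →ₐ[K] B) :
    toConv f.toLinearMap * toConv (f.toLinearMap ∘ₗ antipode K) = 1 := by
  rw [← toConv_algHom_comp_one f, ← id_mul_antipode, algHom_comp_convMul_distrib]
  rfl

end Convolution

section Coaction

variable {K A H : Type*} [CommSemiring K] [Semiring A] [Bialgebra K A] [Semiring H]

section Algebra

variable [Algebra K H]

/-- The right coaction `a ↦ ∑ a₍₁₎ ⊗ π(a₍₂₎)` of `H` on `A` along `π`, as an algebra map. It is a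
comodule structure when `π` is also a coalgebra map, which the definition does not require. -/
noncomputable def coactionAlong (π : A →ₐ[K] H) : A →ₐ[K] A ⊗[K] H :=
  (map (AlgHom.id K A) π).comp (Bialgebra.comulAlgHom K A)

/-- The subalgebra of right coinvariants for the coaction along `π`, i.e. of those `a` with
`∑ a₍₁₎ ⊗ π(a₍₂₎) = a ⊗ 1`. -/
noncomputable def coinvariantsAlong (π : A →ₐ[K] H) : Subalgebra K A :=
  AlgHom.equalizer (coactionAlong π) includeLeft

theorem mem_coinvariantsAlong {π : A →ₐ[K] H} {a : A} :
    a ∈ coinvariantsAlong π ↔ coactionAlong π a = a ⊗ₜ[K] 1 :=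
  Iff.rfl

theorem coactionAlong_apply_eq_sum (π : A →ₐ[K] H) {a : A} {ι : Type*} (𝓡 : Coalgebra.Repr K a ι) :
    coactionAlong π a = ∑ k ∈ 𝓡.index, 𝓡.left k ⊗ₜ[K] π (𝓡.right k) := by
  simp [coactionAlong, ← 𝓡.eq]

theorem toConv_coactionAlong (π : A →ₐ[K] H) :
    toConv (coactionAlong π).toLinearMap =
      toConv (includeLeft : A →ₐ[K] A ⊗[K] H).toLinearMap *
        toConv ((includeRight : H →ₐ[K] A ⊗[K] H).toLinearMap ∘ₗ π.toLinearMap) :=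
  toConv_map_comp_comul LinearMap.id π.toLinearMap

end Algebra

/-- An algebra map `i : H → A` is colinear along `π` if it is a map of right `H`-comodules, where
`H` coacts on itself by `Δ` and on `A` along `π`. -/
def IsColinearAlong [Bialgebra K H] (π : A →ₐ[K] H) (i : H →ₐ[K] A) : Prop :=
  (coactionAlong π).comp i = (map i (AlgHom.id K H)).comp (Bialgebra.comulAlgHom K H)

theorem isColinearAlong_of_leftInverse [Bialgebra K H] {i : H →ₐc[K] A} {π : A →ₐ[K] H}
    (hπi : Function.LeftInverse π i) : IsColinearAlong π (i : H →ₐ[K] A) := by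
  ext h
  simp [coactionAlong_apply_eq_sum _ ((ℛ K h).induced i), ← (ℛ K h).eq, hπi _]

theorem IsColinearAlong.toConv_includeRight_mul [HopfAlgebra K H] {π : A →ₐ[K] H} {i : H →ₐ[K] A}
    (hi : IsColinearAlong π i) :
    toConv (includeRight : H →ₐ[K] A ⊗[K] H).toLinearMap *
        toConv (((coactionAlong π).comp i).toLinearMap ∘ₗ antipode K) =
      toConv (((includeLeft : A →ₐ[K] A ⊗[K] H).comp i).toLinearMap ∘ₗ antipode K) := by
  refine (left_inv_eq_right_inv
    (toConv_algHom_comp_antipode_mul_self (includeLeft.comp i)) ?_).symm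
  have h_colinear : toConv ((coactionAlong π).comp i).toLinearMap =
      toConv ((includeLeft : A →ₐ[K] A ⊗[K] H).comp i).toLinearMap *
        toConv (includeRight : H →ₐ[K] A ⊗[K] H).toLinearMap := by
    rw [hi]
    exact toConv_map_comp_comul i.toLinearMap LinearMap.id
  rw [← mul_assoc, ← h_colinear, toConv_algHom_mul_comp_antipode]

end Coaction

section Projection

variable {K A H : Type*} [CommSemiring K] [Semiring A] [Bialgebra K A] [Semiring H]
  [HopfAlgebra K H]

/-- Radford's projection `a ↦ ∑ a₍₁₎ i(S(π(a₍₂₎)))`, the convolution product of `id` and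
`i ∘ S ∘ π`. It is defined for arbitrary algebra maps `i` and `π`. -/
noncomputable def radfordProjection (i : H →ₐ[K] A) (π : A →ₐ[K] H) : A →ₗ[K] A :=
  mul' K A ∘ₗ (i.toLinearMap ∘ₗ antipode K ∘ₗ π.toLinearMap).lTensor A ∘ₗ comul

section AlgHom

variable (i : H →ₐ[K] A) (π : A →ₐ[K] H)

theorem radfordProjection_apply_eq_sum {a : A} {ι : Type*} (𝓡 : Coalgebra.Repr K a ι) :
    radfordProjection i π a = ∑ k ∈ 𝓡.index, 𝓡.left k * i (antipode K (π (𝓡.right k))) := by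
  simp [radfordProjection, ← 𝓡.eq]

theorem radfordProjection_one : radfordProjection i π 1 = 1 := by
  simp [radfordProjection, one_def]

theorem algHom_comp_radfordProjection {B : Type*} [Semiring B] [Algebra K B] (f : A →ₐ[K] B) :
    toConv (f.toLinearMap ∘ₗ radfordProjection i π) =
      toConv f.toLinearMap *
        toConv ((f.comp i).toLinearMap ∘ₗ antipode K ∘ₗ π.toLinearMap) :=
  ofConv_injective <| algHom_comp_convMul_distrib f (toConv LinearMap.id)
    (toConv (i.toLinearMap ∘ₗ antipode K ∘ₗ π.toLinearMap))

theorem radfordProjection_mul (x y : A) :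
    radfordProjection i π (x * y) =
      mul' K A (TensorProduct.map (mulRight K (radfordProjection i π y))
        (i.toLinearMap ∘ₗ antipode K) (coactionAlong π x)) := by
  rw [coactionAlong_apply_eq_sum π (ℛ K x), radfordProjection_apply_eq_sum i π (ℛ K y),
    radfordProjection_apply_eq_sum i π ((ℛ K x).mul (ℛ K y))]
  simp [antipode_mul_antidistrib, Finset.sum_product, Finset.mul_sum, Finset.sum_mul, mul_assoc]

variable {π}

theorem radfordProjection_mul_of_mem_coinvariantsAlong {a : A} (ha : a ∈ coinvariantsAlong π)
    (b : A) : radfordProjection i π (a * b) = a * radfordProjection i π b := by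
  rw [radfordProjection_mul, mem_coinvariantsAlong.mp ha]
  simp

theorem radfordProjection_of_mem_coinvariantsAlong {a : A} (ha : a ∈ coinvariantsAlong π) :
    radfordProjection i π a = a := by
  simpa only [mul_one, radfordProjection_one] using
    radfordProjection_mul_of_mem_coinvariantsAlong i ha 1

end AlgHom

variable {i : H →ₐ[K] A} {π : A →ₐc[K] H}

theorem IsColinearAlong.radfordProjection_mem_coinvariantsAlong
    (hi : IsColinearAlong (π : A →ₐ[K] H) i) (a : A) :
    radfordProjection i π a ∈ coinvariantsAlong (π : A →ₐ[K] H) := by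
  let ρ := coactionAlong (π : A →ₐ[K] H)
  let ιA : A →ₐ[K] A ⊗[K] H := includeLeft
  let ιH : H →ₐ[K] A ⊗[K] H := includeRight
  have h_cancel : toConv (ιH.toLinearMap ∘ₗ (π : A →ₗ[K] H)) *
        toConv ((ρ.comp i).toLinearMap ∘ₗ antipode K ∘ₗ (π : A →ₗ[K] H)) =
      toConv ((ιA.comp i).toLinearMap ∘ₗ antipode K ∘ₗ (π : A →ₗ[K] H)) :=
    ofConv_injective <| (convMul_comp_coalgHom_distrib (toConv ιH.toLinearMap)
      (toConv ((ρ.comp i).toLinearMap ∘ₗ antipode K)) (π : A →ₗc[K] H)).symm.trans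
      congr(ofConv $hi.toConv_includeRight_mul ∘ₗ (π : A →ₗ[K] H))
  have h_comp : toConv (ρ.toLinearMap ∘ₗ radfordProjection i π) =
      toConv (ιA.toLinearMap ∘ₗ radfordProjection i π) := calc
    _ = toConv ρ.toLinearMap *
          toConv ((ρ.comp i).toLinearMap ∘ₗ antipode K ∘ₗ (π : A →ₗ[K] H)) :=
      algHom_comp_radfordProjection i π ρ
    _ = toConv ιA.toLinearMap * (toConv (ιH.toLinearMap ∘ₗ (π : A →ₗ[K] H)) *
          toConv ((ρ.comp i).toLinearMap ∘ₗ antipode K ∘ₗ (π : A →ₗ[K] H))) := by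
      rw [toConv_coactionAlong, mul_assoc]
      rfl
    _ = toConv ιA.toLinearMap *
          toConv ((ιA.comp i).toLinearMap ∘ₗ antipode K ∘ₗ (π : A →ₗ[K] H)) := by
      rw [h_cancel]
    _ = toConv (ιA.toLinearMap ∘ₗ radfordProjection i π) :=
      (algHom_comp_radfordProjection i π ιA).symm
  exact congr($h_comp a)

theorem IsColinearAlong.radfordProjection_radfordProjection
    (hi : IsColinearAlong (π : A →ₐ[K] H) i) (a : A) :
    radfordProjection i π (radfordProjection i π a) = radfordProjection i π a :=
  radfordProjection_of_mem_coinvariantsAlong i (hi.radfordProjection_mem_coinvariantsAlong a)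

theorem IsColinearAlong.radfordProjection_mul_radfordProjection
    (hi : IsColinearAlong (π : A →ₐ[K] H) i) (x y : A) :
    radfordProjection i π (x * radfordProjection i π y) = radfordProjection i π (x * y) := by
  rw [radfordProjection_mul, hi.radfordProjection_radfordProjection, ← radfordProjection_mul]

theorem IsColinearAlong.radfordProjection_radfordProjection_mul
    (hi : IsColinearAlong (π : A →ₐ[K] H) i) (x y : A) :
    radfordProjection i π (radfordProjection i π x * y) =
      radfordProjection i π x * radfordProjection i π y :=
  radfordProjection_mul_of_mem_coinvariantsAlong i (hi.radfordProjection_mem_coinvariantsAlong x) y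

end Projection

theorem radford_projection_isRotaBaxter_weight_neg_one_general
    {K A H : Type*} [CommRing K] [Ring A] [Bialgebra K A] [Ring H] [HopfAlgebra K H]
    {i : H →ₐ[K] A} {π : A →ₐc[K] H} (hi : IsColinearAlong (π : A →ₐ[K] H) i) :
    radfordProjection i π ∘ₗ radfordProjection i π = radfordProjection i π ∧
      ∀ x y : A, radfordProjection i π x * radfordProjection i π y =
        radfordProjection i π (x * radfordProjection i π y) +
          radfordProjection i π (radfordProjection i π x * y) +
          (-1 : K) • radfordProjection i π (x * y) := by
  refine ⟨LinearMap.ext hi.radfordProjection_radfordProjection, fun x y ↦ ?_⟩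
  rw [hi.radfordProjection_mul_radfordProjection, hi.radfordProjection_radfordProjection_mul,
    neg_one_smul]
  abel

theorem radford_projection_isRotaBaxter_weight_neg_one
    (K : Type*) [Field K] [CharZero K]
    (A : Type*) [Ring A] [Bialgebra K A]
    (H : Type*) [Ring H] [HopfAlgebra K H]
    (i : H →ₐc[K] A) (π : A →ₐc[K] H)
    (hπi : ∀ h : H, π (i h) = h) :
    -- Pr(a) = ∑ a₍₁₎ · i(S(π(a₍₂₎)))
    let Pr : A →ₗ[K] A :=
      LinearMap.mul' K A ∘ₗ
        (((i : H →ₗ[K] A) ∘ₗ antipode (R := K) (A := H) ∘ₗ (π : A →ₗ[K] H)).lTensor A) ∘ₗ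
        Coalgebra.comul
    (Pr ∘ₗ Pr = Pr) ∧
    (∀ x y : A, Pr x * Pr y = Pr (x * Pr y) + Pr (Pr x * y) + (-1 : K) • Pr (x * y)) :=
  radford_projection_isRotaBaxter_weight_neg_one_general (i := (i : H →ₐ[K] A)) (π := π)
    (isColinearAlong_of_leftInverse hπi)
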